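/- Let V be a subspace of a C*-algebra A that is closed under the involution, closed under squaring of self-adjoint elements (a ∈ V self-adjoint implies a² ∈ V), and σ-closed (closed under suprema of bounded monotone increasing sequences that exist in A). Then V is norm-closed. -/

import Mathlib

open Filter Topology

/-- Polynomial approximations of the absolute value from below. -/
noncomputable def absApprox : ℕ → ℝ → ℝ
  | 0, _ => 0
  | n + 1, t => absApprox n t + (1 / 2) * (t * t - absApprox n t * absApprox n t)

theorem absApprox_continuous (n : ℕ) : Continuous (absApprox n) := by
  induction n with
  | zero => exact continuous_const
  | succ n ih =>
    change Continuous fun t => absApprox n t + (1 / 2) * (t * t - absApprox n t * absApprox n t)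
    fun_prop

theorem absApprox_bounds (n : ℕ) (t : ℝ) (ht : |t| ≤ 1) :
    0 ≤ absApprox n t ∧ absApprox n t ≤ |t| ∧ |t| - absApprox n t ≤ 2 / ((n : ℝ) + 2) := by
  induction n with
  | zero => simp [absApprox, ht]
  | succ n ih =>
    obtain ⟨h0, h1, h2⟩ := ih
    have hs : t * t = |t| * |t| := (abs_mul_abs_self t).symm
    have e : absApprox (n + 1) t
      = absApprox n t + (1 / 2) * (|t| * |t| - absApprox n t * absApprox n t) := by
      rw [← hs]; rfl
    rw [e]
    set q := absApprox n t
    set s := |t|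
    have hn : (0 : ℝ) < (n : ℝ) + 2 := by positivity
    refine ⟨by nlinarith, by nlinarith, ?_⟩
    have hr : 2 / ((n : ℝ) + 2) ≤ 1 := by
      rw [div_le_one hn]; have : (0 : ℝ) ≤ n := by positivity
      linarith
    set r := 2 / ((n : ℝ) + 2) with hrd
    have h3 : s - (q + 1 / 2 * (s * s - q * q)) ≤ r - r * r / 2 := by
      have : s - (q + 1 / 2 * (s * s - q * q)) ≤ (s - q) - (s - q) * (s - q) / 2 := by
        nlinarith
      nlinarith
    refine h3.trans ?_
    have h4 : r - r * r / 2 = 2 * ((n : ℝ) + 1) / ((n + 2) * (n + 2)) := by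
      rw [hrd]; field_simp; ring
    rw [h4]; push_cast
    rw [div_le_div_iff₀ (by positivity) (by positivity)]
    nlinarith

section
variable {A : Type*} [CStarAlgebra A] [PartialOrder A] [StarOrderedRing A]

theorem spec_le (x : A) (hsa : IsSelfAdjoint x) (t : ℝ) (ht : t ∈ spectrum ℝ x) :
    |t| ≤ ‖x‖ := by
  have := norm_apply_le_norm_cfc (fun t : ℝ => t) x ht (by fun_prop) hsa
  rwa [cfc_id' ℝ x] at this

theorem mem_of_mono_tendsto (V : Submodule ℂ A)
    (hσ : ∀ (f : ℕ → A) (a : A), (∀ n, f n ∈ V) → (∀ n, IsSelfAdjoint (f n)) →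
      Monotone f → (∃ c : ℝ, ∀ n, ‖f n‖ ≤ c) → IsLUB (Set.range f) a → a ∈ V)
    (f : ℕ → A) (a : A) (h1 : ∀ n, f n ∈ V) (h2 : ∀ n, IsSelfAdjoint (f n))
    (h3 : Monotone f) (h4 : Tendsto f atTop (𝓝 a)) : a ∈ V := by
  refine hσ f a h1 h2 h3 ?_ (isLUB_of_tendsto_atTop h3 h4)
  obtain ⟨c, hc⟩ := h4.norm.bddAbove_range
  exact ⟨c, fun n => hc ⟨n, rfl⟩⟩

theorem abs_mem_of_le_one (V : Submodule ℂ A)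
    (hsq : ∀ a ∈ V, IsSelfAdjoint a → a * a ∈ V)
    (hσ : ∀ (f : ℕ → A) (a : A), (∀ n, f n ∈ V) → (∀ n, IsSelfAdjoint (f n)) →
      Monotone f → (∃ c : ℝ, ∀ n, ‖f n‖ ≤ c) → IsLUB (Set.range f) a → a ∈ V)
    (x : A) (hx : x ∈ V) (hsa : IsSelfAdjoint x) (h1 : ‖x‖ ≤ 1) :
    cfc (fun t : ℝ => |t|) x ∈ V := by
  have hsp : ∀ t ∈ spectrum ℝ x, |t| ≤ 1 := fun t ht =>
    (spec_le x hsa t ht).trans h1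
  have hself : ∀ n, IsSelfAdjoint (cfc (absApprox n) x) := fun n => cfc_predicate _ _
  have hc := absApprox_continuous
  refine mem_of_mono_tendsto V hσ (fun n => cfc (absApprox n) x) _ ?_ hself ?_ ?_
  · intro n
    induction n with
    | zero =>
      have : cfc (absApprox 0) x = 0 := cfc_const_zero ℝ x
      simp [this]
    | succ n ih =>
      have e : cfc (absApprox (n + 1)) x = cfc (absApprox n) x +
          (1 / 2 : ℝ) • (x * x - cfc (absApprox n) x * cfc (absApprox n) x) := by
        have hcn := hc n
        change cfc (fun t => absApprox n t +
          (1 / 2) * (t * t - absApprox n t * absApprox n t)) x = _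
        rw [cfc_add (a := x) (absApprox n)
          (fun t => (1 / 2) * (t * t - absApprox n t * absApprox n t)) (by fun_prop) (by fun_prop),
          cfc_const_mul (1 / 2 : ℝ) (fun t => t * t - absApprox n t * absApprox n t) x (by fun_prop),
          cfc_sub (fun t => t * t) (fun t => absApprox n t * absApprox n t) x (by fun_prop)
            (by fun_prop),
          cfc_mul (absApprox n) (absApprox n) x (by fun_prop) (by fun_prop),
          cfc_mul (fun t : ℝ => t) (fun t : ℝ => t) x (by fun_prop) (by fun_prop),
          cfc_id' ℝ x]
      rw [e]
      exact V.add_mem ih (V.smul_of_tower_mem (1 / 2 : ℝ)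
        (V.sub_mem (hsq _ hx hsa) (hsq _ ih (hself n))))
  · refine monotone_nat_of_le_succ fun n => ?_
    refine cfc_mono (fun t ht => ?_) (hc n).continuousOn (hc (n + 1)).continuousOn
    obtain ⟨a, b, -⟩ := absApprox_bounds n t (hsp t ht)
    change absApprox n t ≤ absApprox n t + (1 / 2) * (t * t - absApprox n t * absApprox n t)
    have hs : t * t = |t| * |t| := (abs_mul_abs_self t).symm
    nlinarith
  · rw [tendsto_iff_norm_sub_tendsto_zero]
    refine squeeze_zero (g := fun n : ℕ => 2 / ((n : ℝ) + 2)) (fun _ => norm_nonneg _)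
      (fun n => ?_) ?_
    · have hcn := hc n
      rw [← cfc_sub (absApprox n) (fun t : ℝ => |t|) x (by fun_prop) (by fun_prop)]
      refine norm_cfc_le (by positivity) fun t ht => ?_
      obtain ⟨a, b, c⟩ := absApprox_bounds n t (hsp t ht)
      rw [Real.norm_eq_abs, abs_sub_comm, abs_of_nonneg (by linarith)]
      exact c
    · exact tendsto_const_nhds.div_atTop
        (tendsto_atTop_add_const_right _ _ tendsto_natCast_atTop_atTop)

theorem abs_mem (V : Submodule ℂ A)
    (hsq : ∀ a ∈ V, IsSelfAdjoint a → a * a ∈ V)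
    (hσ : ∀ (f : ℕ → A) (a : A), (∀ n, f n ∈ V) → (∀ n, IsSelfAdjoint (f n)) →
      Monotone f → (∃ c : ℝ, ∀ n, ‖f n‖ ≤ c) → IsLUB (Set.range f) a → a ∈ V)
    (x : A) (hx : x ∈ V) (hsa : IsSelfAdjoint x) :
    cfc (fun t : ℝ => |t|) x ∈ V := by
  set c : ℝ := ‖x‖ + 1 with hcd
  have hc : 0 < c := by positivity
  have hy : IsSelfAdjoint (c⁻¹ • x) := (IsSelfAdjoint.all c⁻¹).smul hsa
  have h := abs_mem_of_le_one V hsq hσ (c⁻¹ • x) (V.smul_of_tower_mem c⁻¹ hx) hy (by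
    rw [norm_smul, Real.norm_eq_abs, abs_of_pos (by positivity), inv_mul_le_iff₀ hc]
    linarith)
  have e : cfc (fun t : ℝ => |t|) (c⁻¹ • x) = c⁻¹ • cfc (fun t : ℝ => |t|) x := by
    rw [← cfc_comp_smul c⁻¹ (fun t : ℝ => |t|) x (by fun_prop) hsa,
      ← cfc_smul c⁻¹ (fun t : ℝ => |t|) x (by fun_prop)]
    congr 1
    ext t
    simp [abs_mul, abs_of_pos hc]
  rw [e] at h
  have := V.smul_of_tower_mem c h
  rwa [smul_smul, mul_inv_cancel₀ hc.ne', one_smul] at this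

theorem decomp (V : Submodule ℂ A)
    (hsq : ∀ a ∈ V, IsSelfAdjoint a → a * a ∈ V)
    (hσ : ∀ (f : ℕ → A) (a : A), (∀ n, f n ∈ V) → (∀ n, IsSelfAdjoint (f n)) →
      Monotone f → (∃ c : ℝ, ∀ n, ‖f n‖ ≤ c) → IsLUB (Set.range f) a → a ∈ V)
    (x : A) (hx : x ∈ V) (hsa : IsSelfAdjoint x) :
    ∃ p : A, p ∈ V ∧ 0 ≤ p ∧ 0 ≤ p - x ∧ ‖p‖ ≤ ‖x‖ := by
  have e : cfc (fun t : ℝ => max t 0) x = (1 / 2 : ℝ) • (cfc (fun t : ℝ => |t|) x + x) := by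
    conv_rhs => rw [← cfc_id' ℝ x]
    rw [cfc_id' ℝ x]
    nth_rewrite 3 [← cfc_id' ℝ x]
    rw [← cfc_add (a := x) (fun t : ℝ => |t|) (fun t : ℝ => t) (by fun_prop) (by fun_prop),
      ← cfc_smul (1 / 2 : ℝ) _ x (by fun_prop)]
    congr 1
    ext t
    rcases le_total t 0 with h | h
    · simp [h, abs_of_nonpos h]
    · simp [h, abs_of_nonneg h]; ring
  refine ⟨cfc (fun t : ℝ => max t 0) x, ?_, ?_, ?_, ?_⟩
  · rw [e]
    exact V.smul_of_tower_mem (1 / 2 : ℝ) (V.add_mem (abs_mem V hsq hσ x hx hsa) hx)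
  · exact cfc_nonneg fun t _ => le_max_right _ _
  · rw [sub_nonneg]
    conv_lhs => rw [← cfc_id' ℝ x]
    exact cfc_mono (fun t _ => le_max_left _ _) (by fun_prop) (by fun_prop)
  · refine norm_cfc_le (norm_nonneg _) fun t ht => ?_
    have := spec_le x hsa t ht
    rw [Real.norm_eq_abs, abs_of_nonneg (le_max_right _ _)]
    exact max_le ((le_abs_self t).trans this) (norm_nonneg _)

theorem sum_mem_of_nonneg (V : Submodule ℂ A)
    (hσ : ∀ (f : ℕ → A) (a : A), (∀ n, f n ∈ V) → (∀ n, IsSelfAdjoint (f n)) →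
      Monotone f → (∃ c : ℝ, ∀ n, ‖f n‖ ≤ c) → IsLUB (Set.range f) a → a ∈ V)
    (p : ℕ → A) (hp : ∀ n, p n ∈ V) (h0 : ∀ n, 0 ≤ p n) (hs : Summable p) :
    ∑' n, p n ∈ V := by
  refine mem_of_mono_tendsto V hσ (fun n => ∑ k ∈ Finset.range n, p k) _
    (fun n => V.sum_mem fun k _ => hp k)
    (fun n => IsSelfAdjoint.of_nonneg (Finset.sum_nonneg fun k _ => h0 k)) ?_
    hs.hasSum.tendsto_sum_nat
  refine monotone_nat_of_le_succ fun n => ?_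
  simp only [Finset.sum_range_succ]
  exact le_add_of_nonneg_right (h0 n)

theorem closure_sa (V : Submodule ℂ A)
    (hstar : ∀ a ∈ V, star a ∈ V)
    (hsq : ∀ a ∈ V, IsSelfAdjoint a → a * a ∈ V)
    (hσ : ∀ (f : ℕ → A) (a : A), (∀ n, f n ∈ V) → (∀ n, IsSelfAdjoint (f n)) →
      Monotone f → (∃ c : ℝ, ∀ n, ‖f n‖ ≤ c) → IsLUB (Set.range f) a → a ∈ V)
    (b : A) (hb : b ∈ closure (V : Set A)) (hsa : IsSelfAdjoint b) : b ∈ V := by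
  have hex : ∀ n : ℕ, ∃ c ∈ V, IsSelfAdjoint c ∧ ‖c - b‖ ≤ (1 / 2 : ℝ) ^ n := by
    intro n
    obtain ⟨c, hc, hcb⟩ := Metric.mem_closure_iff.1 hb ((1 / 2 : ℝ) ^ n) (by positivity)
    rw [dist_comm, dist_eq_norm] at hcb
    refine ⟨(1 / 2 : ℝ) • (c + star c),
      V.smul_of_tower_mem (1 / 2 : ℝ) (V.add_mem hc (hstar c hc)),
      (IsSelfAdjoint.all (1 / 2 : ℝ)).smul (IsSelfAdjoint.add_star_self c), ?_⟩
    have e : (1 / 2 : ℝ) • (c + star c) - b = (1 / 2 : ℝ) • ((c - b) + star (c - b)) := by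
      rw [star_sub, hsa.star_eq]
      module
    rw [e, norm_smul]
    have := norm_add_le (c - b) (star (c - b))
    rw [norm_star] at this
    norm_num at *
    linarith
  choose c hcV hcsa hcb using hex
  have hd : ∀ n, ‖c (n + 1) - c n‖ ≤ 2 * (1 / 2 : ℝ) ^ n := by
    intro n
    have h1 := norm_sub_le (c (n + 1) - b) (c n - b)
    rw [sub_sub_sub_cancel_right] at h1
    have h2 := hcb (n + 1)
    have h3 := hcb n
    have h4 : (0 : ℝ) < (1 / 2 : ℝ) ^ n := by positivity
    rw [pow_succ] at h2
    linarith
  choose p hpV hp0 hpx hpn using fun n => decomp V hsq hσ (c (n + 1) - c n)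
    (V.sub_mem (hcV _) (hcV _)) ((hcsa _).sub (hcsa _))
  have hg : Summable fun n : ℕ => 2 * (1 / 2 : ℝ) ^ n := summable_geometric_two.mul_left 2
  have hsp : Summable p := Summable.of_norm_bounded hg fun n => (hpn n).trans (hd n)
  have hsd : Summable fun n => c (n + 1) - c n := Summable.of_norm_bounded hg hd
  have m1 := sum_mem_of_nonneg V hσ p hpV hp0 hsp
  have m2 := sum_mem_of_nonneg V hσ (fun n => p n - (c (n + 1) - c n))
    (fun n => V.sub_mem (hpV n) (V.sub_mem (hcV _) (hcV _))) hpx (hsp.sub hsd)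
  rw [hsp.tsum_sub hsd] at m2
  have m3 : ∑' n, (c (n + 1) - c n) ∈ V := by simpa using V.sub_mem m1 m2
  have ht := hsd.hasSum.tendsto_sum_nat
  simp only [Finset.sum_range_sub] at ht
  have hcl : Tendsto c atTop (𝓝 b) := by
    rw [tendsto_iff_norm_sub_tendsto_zero]
    exact squeeze_zero (fun _ => norm_nonneg _) hcb
      (tendsto_pow_atTop_nhds_zero_of_lt_one (by norm_num) (by norm_num))
  have := tendsto_nhds_unique ht (hcl.sub_const (c 0))
  rw [this] at m3
  simpa using V.add_mem m3 (hcV 0)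

end

/-- A *-subspace of a C*-algebra that is closed under squaring self-adjoint elements
and σ-closed (closed under existing suprema of bounded monotone increasing sequences
of its self-adjoint elements) is norm-closed. -/
theorem stmt13 {A : Type*} [CStarAlgebra A] [PartialOrder A] [StarOrderedRing A]
    (V : Submodule ℂ A) (hstar : ∀ a ∈ V, star a ∈ V)
    (hsq : ∀ a ∈ V, IsSelfAdjoint a → a * a ∈ V)
    (hσ : ∀ (f : ℕ → A) (a : A), (∀ n, f n ∈ V) → (∀ n, IsSelfAdjoint (f n)) →
      Monotone f → (∃ c : ℝ, ∀ n, ‖f n‖ ≤ c) → IsLUB (Set.range f) a → a ∈ V) :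
    IsClosed (V : Set A) := by
  refine isClosed_of_closure_subset fun a ha => ?_
  have key := closure_sa V hstar hsq hσ
  have hW : ∀ z : A, z ∈ closure (V : Set A) ↔ z ∈ V.topologicalClosure := fun z => Iff.rfl
  have hs : star a ∈ closure (V : Set A) :=
    map_mem_closure continuous_star ha fun x hx => hstar x hx
  rw [hW] at ha hs
  have h1 := key (a + star a) (V.topologicalClosure.add_mem ha hs)
    (IsSelfAdjoint.add_star_self a)
  have h2 := key (Complex.I • (a - star a))
    (V.topologicalClosure.smul_mem _ (V.topologicalClosure.sub_mem ha hs)) (by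
      rw [isSelfAdjoint_iff, star_smul, star_sub, star_star]
      simp [smul_sub]
      abel)
  have h3 := V.smul_mem (1 / 2 : ℂ) (V.sub_mem h1 (V.smul_mem Complex.I h2))
  have e : (1 / 2 : ℂ) • (a + star a - Complex.I • Complex.I • (a - star a)) = a := by
    rw [smul_smul, Complex.I_mul_I]
    module
  rwa [e] at h3
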